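/- arXiv:math/0107085 — 2 statements merged into one kernel-verified Lean document; each statement's English description precedes it below -/
import Mathlib

section
/- Non-existence of C² Baumslag–Solitar actions: For integers n > m > 1, no subgroup of Diff²₊(I) is isomorphic to the Baumslag–Solitar group BS(m,n) = ⟨a, b | a bᵐ a⁻¹ = bⁿ⟩; equivalently, there is no injective group homomorphism from BS(m,n) into Diff²₊(I). If moreover m does not divide n, then likewise no subgroup of Diff²₊(S¹) is isomorphic to BS(m,n). -/
/-- The single defining relation of the Baumslag–Solitar group
`BS(m,n) = ⟨a, b | a bᵐ a⁻¹ = bⁿ⟩`, with `a = FreeGroup.of 0` and `b = FreeGroup.of 1`. -/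
abbrev BSRels (m n : ℕ) : Set (FreeGroup (Fin 2)) :=
  {FreeGroup.of 0 * FreeGroup.of 1 ^ m * (FreeGroup.of 0)⁻¹ * (FreeGroup.of 1 ^ n)⁻¹}

/-- A permutation of `ℝ` representing an orientation-preserving C² diffeomorphism of
`I = [0,1]`: it is the identity off `[0,1]`, is C² on `[0,1]`, and has positive
(one-sided, at the endpoints) derivative on `[0,1]`. -/
def IsDiffI (f : Equiv.Perm ℝ) : Prop :=
  (∀ x, x ∉ Set.Icc (0 : ℝ) 1 → f x = x) ∧
  ContDiffOn ℝ 2 f (Set.Icc 0 1) ∧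
  ∀ x ∈ Set.Icc (0 : ℝ) 1, 0 < derivWithin f (Set.Icc 0 1) x

/-- A permutation of `S¹ = ℝ/ℤ` representing an orientation-preserving C²
diffeomorphism of the circle: it is induced by a C² map `F : ℝ → ℝ` with everywhere
positive derivative satisfying `F (x+1) = F x + 1`. -/
def IsDiffCircle (f : Equiv.Perm (AddCircle (1 : ℝ))) : Prop :=
  ∃ F : ℝ → ℝ, ContDiff ℝ 2 F ∧ (∀ x, 0 < deriv F x) ∧
    (∀ x, F (x + 1) = F x + 1) ∧ ∀ x : ℝ, f ↑x = ↑(F x)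

/-! ### The group-theoretic part: a nontrivial commutator in `BS(m,n)` -/

theorem bs_ne (m n r : ℕ) (hm : 0 < m) (hn : 0 < n) (hmr : ¬ m ∣ r) (hnr : ¬ n ∣ r)
    (a b : PresentedGroup (BSRels m n)) (ha : a = PresentedGroup.of 0)
    (hb : b = PresentedGroup.of 1) :
    (a * b ^ r * a⁻¹) * b ^ r ≠ b ^ r * (a * b ^ r * a⁻¹) := by
  intro hcomm
  let G := Multiplicative ℤ
  let fm : G →* G := powMonoidHom m
  let fn : G →* G := powMonoidHom n
  have hpow : ∀ (k : ℕ) (x : G), Multiplicative.toAdd (x ^ k) = k * Multiplicative.toAdd x := by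
    intro k x; change k • Multiplicative.toAdd x = _; simp
  have hinj : ∀ k : ℕ, 0 < k → Function.Injective (powMonoidHom k : G →* G) := by
    intro k hk x y hxy
    have h1 : x ^ k = y ^ k := hxy
    have h2 := congrArg Multiplicative.toAdd h1
    rw [hpow, hpow] at h2
    have h3 : (k : ℤ) ≠ 0 := by exact_mod_cast hk.ne'
    exact Multiplicative.toAdd.injective (mul_left_cancel₀ h3 h2)
  let e : fm.range ≃* fn.range :=
    (MonoidHom.ofInjective (hinj m hm)).symm.trans (MonoidHom.ofInjective (hinj n hn))
  let g : G := Multiplicative.ofAdd 1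
  have hgm : g ^ m ∈ fm.range := ⟨g, rfl⟩
  have he : (e ⟨g ^ m, hgm⟩ : G) = g ^ n := by
    have : (⟨g ^ m, hgm⟩ : fm.range) = MonoidHom.ofInjective (hinj m hm) g := rfl
    rw [this]
    simp only [e, MulEquiv.trans_apply, MulEquiv.symm_apply_apply]
    rfl
  let H := HNNExtension G fm.range fn.range e
  let t : H := HNNExtension.t
  let B : H := HNNExtension.of g
  have hrel : t * B ^ m * t⁻¹ = B ^ n := by
    have := HNNExtension.equiv_eq_conj (φ := e) ⟨g ^ m, hgm⟩
    rw [he] at this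
    simp only [map_pow] at this
    exact this.symm
  let v : Fin 2 → H := ![t, B]
  have hv : ∀ x ∈ BSRels m n, FreeGroup.lift v x = 1 := by
    intro x hx
    rw [Set.mem_singleton_iff] at hx
    subst hx
    simp only [map_mul, map_inv, map_pow, FreeGroup.lift_apply_of]
    change t * B ^ m * t⁻¹ * (B ^ n)⁻¹ = 1
    rw [hrel, mul_inv_cancel]
  let Φ := PresentedGroup.toGroup hv
  have hΦa : Φ a = t := by rw [ha]; exact PresentedGroup.toGroup.of hv
  have hΦb : Φ b = B := by rw [hb]; exact PresentedGroup.toGroup.of hv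
  have h1 := congrArg Φ hcomm
  simp only [map_mul, map_inv, map_pow, hΦa, hΦb] at h1
  have hmem : ∀ k : ℕ, ¬ k ∣ r → g ^ r ∉ (powMonoidHom k : G →* G).range := by
    rintro k hk ⟨x, hx⟩
    have h1 : x ^ k = g ^ r := hx
    have h2 := congrArg Multiplicative.toAdd h1
    rw [hpow, hpow] at h2
    apply hk
    have : (k : ℤ) ∣ r := ⟨Multiplicative.toAdd x, by rw [h2]; simp [g]⟩
    exact_mod_cast this
  have hm1 := hmem m hmr
  have hn1 := hmem n hnr
  let w : HNNExtension.NormalWord.ReducedWord G fm.range fn.range :=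
    { head := 1
      toList := [(1, g ^ r), (-1, g ^ r), (1, (g ^ r)⁻¹), (-1, (g ^ r)⁻¹)]
      chain := by
        simp only [List.isChain_cons_cons, List.isChain_singleton, and_true,
          HNNExtension.toSubgroup_one, HNNExtension.toSubgroup_neg_one]
        exact ⟨fun h => absurd h hm1, fun h => absurd h hn1,
          fun h => absurd ((Subgroup.inv_mem_iff _).1 h) hm1⟩ }
  have hw : w.prod e = 1 := by
    simp only [HNNExtension.NormalWord.ReducedWord.prod, w, List.map_cons, List.map_nil, List.prod_cons,
      List.prod_nil, map_one, map_pow, one_mul, mul_one, Units.val_one, Units.val_neg,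
      zpow_one, zpow_neg]
    rw [show (HNNExtension.of (g ^ r)⁻¹ : H) = (B ^ r)⁻¹ by rw [map_inv, map_pow]]
    change t * B ^ r * (t⁻¹ * B ^ r * (t * (B ^ r)⁻¹ * (t⁻¹ * (B ^ r)⁻¹))) = 1
    calc _ = (t * B ^ r * t⁻¹ * B ^ r) * (B ^ r * (t * B ^ r * t⁻¹))⁻¹ := by group
      _ = 1 := by rw [h1, mul_inv_cancel]
  have := HNNExtension.ReducedWord.toList_eq_nil_of_mem_of_range e w (by rw [hw]; exact one_mem _)
  simp [w] at this

/-! ### The dynamical core: a metric version of the Kopell lemma -/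

/-- Bounded distortion of slopes of `f` on subintervals of `[u,v]`. -/
def Distort (u v : ℝ) (f : ℝ → ℝ) : Prop :=
  ∃ C : ℝ, 0 ≤ C ∧ ∀ α β : ℝ, u ≤ α → α ≤ β → β ≤ v →
    ∀ s t x y : ℝ, α ≤ s → s ≤ t → t ≤ β → α ≤ x → x ≤ y → y ≤ β →
      (f y - f x) * (t - s) ≤ Real.exp (C * (β - α)) * ((y - x) * (f t - f s))

theorem perm_cont (f : Equiv.Perm ℝ) (hf : StrictMono f) : Continuous f :=
  hf.monotone.continuous_of_surjective f.surjective

open Filter Topology in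
/-- A monotone sequence of iterates decreasing from `x` with lower bound `p` converges to a
fixed point. -/
theorem iter_lim (f : Equiv.Perm ℝ) (hf : StrictMono f) (x p : ℝ) (hx : f x ≤ x)
    (hp : ∀ i : ℕ, p ≤ (f ^ i) x) :
    ∃ e, p ≤ e ∧ f e = e ∧ Tendsto (fun i : ℕ => (f ^ i) x) atTop (𝓝 e) ∧
      ∀ i : ℕ, e ≤ (f ^ i) x := by
  have hanti : Antitone (fun i : ℕ => (f ^ i) x) := by
    apply antitone_nat_of_succ_le
    intro i
    induction i with
    | zero => simpa using hx
    | succ k ih =>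
      rw [pow_succ' f (k + 1), pow_succ' f k] 
      simp only [Equiv.Perm.mul_apply]
      rw [pow_succ' f k] at ih
      simp only [Equiv.Perm.mul_apply] at ih
      exact hf.monotone ih
  have hbdd : BddBelow (Set.range (fun i : ℕ => (f ^ i) x)) := ⟨p, by rintro _ ⟨i, rfl⟩; exact hp i⟩
  have hlim := tendsto_atTop_ciInf hanti hbdd
  refine ⟨_, ge_of_tendsto' hlim hp, ?_, hlim, fun i => ciInf_le hbdd i⟩
  have h1 := ((perm_cont f hf).tendsto _).comp hlim
  have h2 := hlim.comp (tendsto_add_atTop_nat 1)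
  refine tendsto_nhds_unique h1 (h2.congr fun i => ?_)
  simp [pow_succ']

theorem iter_mono (f : Equiv.Perm ℝ) (hf : StrictMono f) (i : ℕ) : StrictMono ⇑(f ^ i) := by
  rw [Equiv.Perm.coe_pow]; exact hf.iterate i

theorem iter_fix (f : Equiv.Perm ℝ) (x : ℝ) (h : f x = x) (i : ℕ) : (f ^ i) x = x := by
  rw [Equiv.Perm.coe_pow]; exact Function.iterate_fixed h i

theorem pow_le_self (f : Equiv.Perm ℝ) (hf : StrictMono f) (x : ℝ) (h : f x ≤ x) (i : ℕ) :
    (f ^ i) x ≤ x := by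
  induction i with
  | zero => simp
  | succ k ih =>
    rw [pow_succ']
    exact (hf.monotone ih).trans h

/-- a monotone perm: if a positive power fixes a point, so does the map. -/
theorem fix_of_pow_fix (f : Equiv.Perm ℝ) (hf : StrictMono f) (x : ℝ) (n : ℕ) (hn : 0 < n)
    (h : (f ^ n) x = x) : f x = x := by
  have key := Function.Commute.iterate_pos_eq_iff_map_eq (f := f) (g := id) (x := x)
    (Function.Commute.id_right) hf.monotone strictMono_id hn
  rw [Equiv.Perm.coe_pow] at h
  simpa using key.1 (by simpa using h)

theorem iter_distort (u v p x₀ C : ℝ) (f : Equiv.Perm ℝ) (hf : StrictMono f) (hup : u ≤ p)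
    (hx : p ≤ x₀) (hxv : x₀ ≤ v) (hfp : f p = p) (hfx : f x₀ ≤ x₀)
    (hC : ∀ α β : ℝ, u ≤ α → α ≤ β → β ≤ v →
    ∀ s t x y : ℝ, α ≤ s → s ≤ t → t ≤ β → α ≤ x → x ≤ y → y ≤ β →
      (f y - f x) * (t - s) ≤ Real.exp (C * (β - α)) * ((y - x) * (f t - f s)))
    (s t x y : ℝ) (hs : f x₀ ≤ s) (hst : s ≤ t) (ht : t ≤ x₀)
    (hx' : f x₀ ≤ x) (hxy : x ≤ y) (hy : y ≤ x₀) (i : ℕ) :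
    ((f ^ i) y - (f ^ i) x) * (t - s) ≤
      Real.exp (C * (x₀ - (f ^ i) x₀)) * ((y - x) * ((f ^ i) t - (f ^ i) s)) := by
  rcases hst.eq_or_lt with rfl | hst
  · simp
  rcases hxy.eq_or_lt with rfl | hxy
  · simp
  induction i with
  | zero => simp [mul_comm]
  | succ i ih =>
    have hm := iter_mono f hf i
    have hfi : p ≤ (f ^ i) (f x₀) := by
      have := (iter_mono f hf (i+1)).monotone hx
      rw [iter_fix f p hfp] at this
      rw [pow_succ] at this
      exact this
    have hcomm : (f ^ (i + 1)) x₀ = (f ^ i) (f x₀) := by rw [pow_succ]; rfl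
    have h1 := hC ((f ^ i) (f x₀)) ((f ^ i) x₀) (hup.trans hfi) (hm.monotone hfx)
      (by
        have : (f ^ i) x₀ ≤ x₀ := by
          exact pow_le_self f hf x₀ hfx i
        linarith)
      ((f ^ i) s) ((f ^ i) t) ((f ^ i) x) ((f ^ i) y) (hm.monotone hs) (hm.monotone hst.le)
      (hm.monotone ht) (hm.monotone hx') (hm.monotone hxy.le) (hm.monotone hy)
    have hts : 0 < (f ^ i) t - (f ^ i) s := sub_pos.2 (hm hst)
    have hyx : 0 < (f ^ i) y - (f ^ i) x := sub_pos.2 (hm hxy)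
    have e : ∀ z, (f ^ (i + 1)) z = f ((f ^ i) z) := by intro z; rw [pow_succ']; rfl
    rw [hcomm]
    simp only [e]
    set T := (f ^ i) t - (f ^ i) s
    set Y := (f ^ i) y - (f ^ i) x
    set fY := f ((f ^ i) y) - f ((f ^ i) x)
    set fT := f ((f ^ i) t) - f ((f ^ i) s)
    have hfT : 0 < fT := sub_pos.2 (hf (hm hst))
    have hexp : Real.exp (C * (x₀ - (f ^ i) (f x₀))) =
       Real.exp (C * ((f ^ i) x₀ - (f ^ i) (f x₀))) * Real.exp (C * (x₀ - (f ^ i) x₀)) := by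
      rw [← Real.exp_add]; congr 1; ring
    rw [hexp]
    set E1 := Real.exp (C * ((f ^ i) x₀ - (f ^ i) (f x₀)))
    set E2 := Real.exp (C * (x₀ - (f ^ i) x₀))
    have hE1 : 0 < E1 := Real.exp_pos _
    have hts' : 0 < t - s := sub_pos.2 hst
    have : fY * (t - s) * (T * Y) ≤ E1 * E2 * ((y - x) * fT) * (T * Y) := by
      calc fY * (t - s) * (T * Y) = (fY * T) * (Y * (t - s)) := by ring
        _ ≤ (E1 * (Y * fT)) * (E2 * ((y - x) * T)) := by
            apply mul_le_mul h1 ih (by positivity) (by positivity)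
        _ = _ := by ring
    exact le_of_mul_le_mul_right this (by positivity)

open Filter Topology in
/-- the Kopell lemma on one fundamental domain. -/
theorem kopell_fund (u v p x₀ : ℝ) (f h : Equiv.Perm ℝ) (hf : StrictMono f) (hup : u ≤ p)
    (hx : p < x₀) (hxv : x₀ ≤ v) (hfp : f p = p) (hfx : ∀ x, p < x → x ≤ x₀ → f x < x)
    (hD : Distort u v f) (hh : StrictMono h) (hhD : ∀ r : ℤ, Distort u v ⇑(h ^ r))
    (hhm : ∀ r : ℤ, StrictMono ⇑(h ^ r))
    (hcomm : Commute f h) (hfix : h x₀ = x₀) :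
    ∀ x, f x₀ ≤ x → x ≤ x₀ → h x = x := by
  obtain ⟨C, hC0, hC⟩ := hD
  have hfx₀ := hfx x₀ hx le_rfl
  have hpi : ∀ (i : ℕ) (z : ℝ), p ≤ z → p ≤ (f ^ i) z := fun i z hz => by
    have := (iter_mono f hf i).monotone hz
    rwa [iter_fix f p hfp] at this
  have hlim : Tendsto (fun i : ℕ => (f ^ i) x₀) atTop (𝓝 p) := by
    obtain ⟨e, hpe, hfe, hl, hle⟩ := iter_lim f hf x₀ p hfx₀.le (fun i => hpi i _ hx.le)
    rcases hpe.eq_or_lt with rfl | hlt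
    · exact hl
    · exact absurd hfe (hfx e hlt (by simpa using hle 0)).ne
  have hcr : ∀ (r : ℤ) (i : ℕ) (z : ℝ), (h ^ r) ((f ^ i) z) = (f ^ i) ((h ^ r) z) := by
    intro r i z
    have : Commute (f ^ i) (h ^ r) := (hcomm.pow_left i).zpow_right r
    have h2 := congrArg (fun k : Equiv.Perm ℝ => k z) this.eq
    exact h2.symm
  have hfixr : ∀ r : ℤ, (h ^ r) x₀ = x₀ := by
    intro r
    exact Function.IsFixedPt.perm_zpow (e := h) hfix r
  have hpr : ∀ r : ℤ, (h ^ r) p = p := by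
    intro r
    have h1 := ((perm_cont _ (hhm r)).tendsto p).comp hlim
    refine tendsto_nhds_unique (h1.congr fun i => ?_) hlim
    simp only [Function.comp]
    rw [hcr, hfixr]
  set K := Real.exp (C * (x₀ - p)) with hK
  have hKpos : 0 < K := Real.exp_pos _
  have hdist : ∀ s t x y : ℝ, f x₀ ≤ s → s ≤ t → t ≤ x₀ → f x₀ ≤ x → x ≤ y → y ≤ x₀ → ∀ i : ℕ,
      ((f ^ i) y - (f ^ i) x) * (t - s) ≤ K * ((y - x) * ((f ^ i) t - (f ^ i) s)) := by
    intro s t x y h1 h2 h3 h4 h5 h6 i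
    refine (iter_distort u v p x₀ C f hf hup hx.le hxv hfp hfx₀.le hC s t x y h1 h2 h3 h4 h5 h6 i).trans ?_
    have a1 := (iter_mono f hf i).monotone h2
    apply mul_le_mul_of_nonneg_right _ (mul_nonneg (by linarith) (by linarith))
    apply Real.exp_le_exp.2
    have := hpi i x₀ hx.le
    nlinarith
  -- uniform Lipschitz bound
  have hLip : ∀ (r : ℤ) (x y : ℝ), f x₀ ≤ x → x ≤ y → y ≤ x₀ →
      (h ^ r) y - (h ^ r) x ≤ 2 * K * K * (y - x) := by
    intro r x y h1 h2 h3
    obtain ⟨c, hc0, hc⟩ := hhD r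
    set H := h ^ r with hH
    have hHm : StrictMono H := hhm r
    have hsmall : ∃ i : ℕ, Real.exp (c * ((f ^ i) x₀ - p)) ≤ 2 := by
      have t1 : Tendsto (fun i : ℕ => Real.exp (c * ((f ^ i) x₀ - p))) atTop
          (𝓝 (Real.exp (c * (p - p)))) :=
        (Real.continuous_exp.tendsto _).comp ((hlim.sub_const p).const_mul c)
      have : Real.exp (c * (p - p)) < 2 := by simp
      exact ((t1.eventually_lt_const this).exists).imp fun i hi => hi.le
    obtain ⟨i, hi⟩ := hsmall
    have hm := iter_mono f hf i
    have hpx : p ≤ f x₀ := by have := hf hx; rw [hfp] at this; exact this.le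
    have hpix : p < (f ^ i) x₀ := by
      have := hm hx; rwa [iter_fix f p hfp] at this
    have q1 := hc p ((f ^ i) x₀) hup hpix.le
      ((pow_le_self f hf x₀ hfx₀.le i).trans hxv) p ((f ^ i) x₀) ((f ^ i) x) ((f ^ i) y)
      le_rfl hpix.le le_rfl (hpi i x (hpx.trans h1)) (hm.monotone h2) (hm.monotone h3)
    rw [hpr r, hcr r i x₀, hfixr, hcr r i y, hcr r i x] at q1
    have hyx : 0 ≤ (f ^ i) y - (f ^ i) x := sub_nonneg.2 (hm.monotone h2)
    have q2 : (f ^ i) (H y) - (f ^ i) (H x) ≤ 2 * ((f ^ i) y - (f ^ i) x) := by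
      have hpos : 0 < (f ^ i) x₀ - p := sub_pos.2 hpix
      have : ((f ^ i) (H y) - (f ^ i) (H x)) * ((f ^ i) x₀ - p)
          ≤ (2 * ((f ^ i) y - (f ^ i) x)) * ((f ^ i) x₀ - p) := by
        refine q1.trans ?_
        rw [mul_assoc]
        exact mul_le_mul_of_nonneg_right hi (by positivity)
      exact le_of_mul_le_mul_right this hpos
    have hHf : H (f x₀) = f x₀ := by
      have := hcr r 1 x₀
      rw [hfixr] at this; simpa using this
    have hHx : f x₀ ≤ H x := by rw [← hHf]; exact hHm.monotone h1
    have hHy : H y ≤ x₀ := by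
      conv_rhs => rw [← hfixr r]
      exact hHm.monotone h3
    have hHxy : H x ≤ H y := hHm.monotone h2
    have q3 := hdist (H x) (H y) (f x₀) x₀ hHx hHxy hHy le_rfl hfx₀.le le_rfl i
    have q4 := hdist (f x₀) x₀ x y le_rfl hfx₀.le le_rfl h1 h2 h3 i
    set L := x₀ - f x₀
    set A := (f ^ i) x₀ - (f ^ i) (f x₀)
    have hL : 0 < L := sub_pos.2 hfx₀
    have hA : 0 < A := sub_pos.2 (hm hfx₀)
    have : (H y - H x) * A ≤ (2 * K * K * (y - x)) * A := by
      calc (H y - H x) * A = A * (H y - H x) := by ring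
        _ ≤ K * (L * ((f ^ i) (H y) - (f ^ i) (H x))) := q3
        _ ≤ K * (L * (2 * ((f ^ i) y - (f ^ i) x))) := by gcongr
        _ = 2 * K * (((f ^ i) y - (f ^ i) x) * L) := by ring
        _ ≤ 2 * K * (K * ((y - x) * A)) := by gcongr
        _ = _ := by ring
    exact le_of_mul_le_mul_right this hA
  -- no point moves down
  have hdown : ∀ k : Equiv.Perm ℝ, (∃ ε : ℤ, k = h ^ ε) → ∀ x, f x₀ ≤ x → x ≤ x₀ → ¬ k x < x := by
    rintro k ⟨ε, rfl⟩ x h1 h2 hlt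
    set k := h ^ ε with hk
    have hkm : StrictMono k := hhm ε
    have hkf : k (f x₀) = f x₀ := by
      have := hcr ε 1 x₀
      rw [hfixr] at this; simpa using this
    obtain ⟨e, hpe, hfe, hl, hle⟩ := iter_lim k hkm x (f x₀) hlt.le (fun i => by
      have := (iter_mono k hkm i).monotone h1
      rwa [iter_fix k _ hkf] at this)
    have hex : e < x := by
      have := hle 1
      simp only [pow_one] at this
      linarith
    have hbound : ∀ i : ℕ, x - e ≤ 2 * K * K * ((k ^ i) x - e) := by
      intro i
      have := hLip (-(ε * i)) e ((k ^ i) x) hpe (hle i) ((pow_le_self k hkm x hlt.le i).trans h2)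
      have e1 : h ^ (-(ε * i)) = (k ^ i)⁻¹ := by
        rw [hk, zpow_neg, zpow_mul, zpow_natCast]
      rw [e1, show ((k ^ i)⁻¹) ((k ^ i) x) = x from (k ^ i).symm_apply_apply x] at this
      have e2 : ((k ^ i)⁻¹) e = e := by
        rw [Equiv.Perm.inv_eq_iff_eq, iter_fix k e hfe]
      rwa [e2] at this
    have hl2 : Tendsto (fun i : ℕ => 2 * K * K * ((k ^ i) x - e)) atTop (𝓝 (2 * K * K * (e - e))) :=
      (hl.sub_const e).const_mul _
    have := ge_of_tendsto' hl2 hbound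
    simp at this
    linarith
  intro x h1 h2
  by_contra hne
  rcases lt_or_gt_of_ne hne with hlt | hgt
  · exact hdown h ⟨1, by simp⟩ x h1 h2 hlt
  · refine hdown h⁻¹ ⟨-1, by simp⟩ x h1 h2 ?_
    have h3 := hhm (-1) hgt
    simpa using h3

open Filter Topology in
theorem kopell (u v p q x₀ : ℝ) (f h : Equiv.Perm ℝ) (hf : StrictMono f) (hup : u ≤ p)
    (hx : p < x₀) (hxq : x₀ < q) (hqv : q ≤ v) (hfp : f p = p)
    (hfx : ∀ x, p < x → x < q → f x < x)
    (hD : Distort u v f) (hh : StrictMono h) (hhD : ∀ r : ℤ, Distort u v ⇑(h ^ r))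
    (hhm : ∀ r : ℤ, StrictMono ⇑(h ^ r))
    (hcomm : Commute f h) (hfix : h x₀ = x₀) :
    ∀ x, p < x → x < q → h x = x := by
  have hpi : ∀ (i : ℕ) (z : ℝ), p < z → p < (f ^ i) z := fun i z hz => by
    have := (iter_mono f hf i) hz
    rwa [iter_fix f p hfp] at this
  have hlim : ∀ z, p < z → z < q → Tendsto (fun i : ℕ => (f ^ i) z) atTop (𝓝 p) := by
    intro z hz hzq
    obtain ⟨e, hpe, hfe, hl, hle⟩ := iter_lim f hf z p (hfx z hz hzq).le (fun i => (hpi i _ hz).le)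
    rcases hpe.eq_or_lt with rfl | hlt
    · exact hl
    · exact absurd hfe (hfx e hlt ((hle 0).trans_lt (by simpa using hzq))).ne
  have hcr : ∀ (i : ℕ) (z : ℝ), h ((f ^ i) z) = (f ^ i) (h z) := by
    intro i z
    have h2 := congrArg (fun k : Equiv.Perm ℝ => k z) (hcomm.pow_left i).eq
    exact h2.symm
  intro x hpx hxq'
  obtain ⟨i, hi⟩ := ((hlim x hpx hxq').eventually_lt_const hx).exists
  set y := (f ^ i) x with hy
  have hpy : p < y := hpi i x hpx
  have hex : ∃ j : ℕ, (f ^ j) x₀ < y := ((hlim x₀ hx hxq).eventually_lt_const hpy).exists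
  classical
  have hj := Nat.find_spec hex
  have hjmin := fun k => Nat.find_min hex (m := k)
  set j := Nat.find hex
  have hj0 : j ≠ 0 := by
    intro h0
    rw [h0] at hj
    simp at hj
    linarith
  obtain ⟨k, hk⟩ := Nat.exists_eq_succ_of_ne_zero hj0
  have hk1 : y ≤ (f ^ k) x₀ := not_lt.1 (hjmin k (by omega))
  have hk2 : f ((f ^ k) x₀) ≤ y := by
    have := hj.le
    rw [hk, Nat.succ_eq_add_one, pow_succ'] at this
    exact this
  have hkq : (f ^ k) x₀ < q := (pow_le_self f hf x₀ (hfx x₀ hx hxq).le k).trans_lt hxq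
  have := kopell_fund u v p ((f ^ k) x₀) f h hf hup (hpi k _ hx) (hkq.le.trans hqv) hfp
    (fun z h1 h2 => hfx z h1 (h2.trans_lt hkq)) hD hh hhD hhm hcomm (by rw [hcr, hfix]) y hk2 hk1
  rw [hy, hcr] at this
  exact (f ^ i).injective this

theorem ratio_chain (f g : Equiv.Perm ℝ) (hf : StrictMono f) (p q : ℝ)
    (hfp : ∀ x, p < x → x < q → p < f x ∧ f x < q)
    (hlt : ∀ x, p < x → x < q → g (f x) < f (g x)) (k : ℕ) :
    ∀ x, p < x → x < q → g ((f ^ (k + 1)) x) < (f ^ (k + 1)) (g x) := by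
  induction k with
  | zero => simpa using hlt
  | succ k ih =>
    intro x h1 h2
    obtain ⟨h3, h4⟩ := hfp x h1 h2
    have a1 := ih (f x) h3 h4
    have a2 := (iter_mono f hf (k + 1)) (hlt x h1 h2)
    rw [pow_succ f (k + 1)]
    exact a1.trans a2

theorem ratio_chain' (f g : Equiv.Perm ℝ) (hf : StrictMono f) (p q : ℝ)
    (hfp : ∀ x, p < x → x < q → p < f x ∧ f x < q)
    (hlt : ∀ x, p < x → x < q → f (g x) < g (f x)) (k : ℕ) :
    ∀ x, p < x → x < q → (f ^ (k + 1)) (g x) < g ((f ^ (k + 1)) x) := by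
  induction k with
  | zero => simpa using hlt
  | succ k ih =>
    intro x h1 h2
    obtain ⟨h3, h4⟩ := hfp x h1 h2
    have a1 := ih (f x) h3 h4
    have a2 := (iter_mono f hf (k + 1)) (hlt x h1 h2)
    rw [pow_succ f (k + 1)]
    exact a2.trans a1

/-- Commutation on an interval where `f x < x`. -/
theorem comm_on (u v p q : ℝ) (S : Subgroup (Equiv.Perm ℝ))
    (hS : ∀ f ∈ S, StrictMono f ∧ Distort u v f) (f g : Equiv.Perm ℝ) (hf : f ∈ S) (hg : g ∈ S)
    (m n : ℕ) (hn : 0 < n) (hrel : g ^ m = f ^ n)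
    (hup : u ≤ p) (hqv : q ≤ v) (hfp : f p = p) (hfq : f q = q)
    (hfx : ∀ x, p < x → x < q → f x < x) :
    ∀ x, p < x → x < q → f (g x) = g (f x) := by
  have hfm := (hS f hf).1
  have hgm := (hS g hg).1
  have hBf : Commute (f ^ n) f := (Commute.refl f).pow_left n
  have hBg : Commute (f ^ n) g := by rw [← hrel]; exact (Commute.refl g).pow_left m
  have hmaps : ∀ x, p < x → x < q → p < f x ∧ f x < q := by
    intro x h1 h2
    refine ⟨?_, ?_⟩
    · have := hfm h1; rwa [hfp] at this
    · have := hfm h2; rwa [hfq] at this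
  have hBx : ∀ x, p < x → x < q → (f ^ n) x < x := by
    intro x h1 h2
    obtain ⟨k, rfl⟩ := Nat.exists_eq_succ_of_ne_zero hn.ne'
    rw [Nat.succ_eq_add_one, pow_succ]
    have a1 := pow_le_self f hfm (f x) (hfx _ (hmaps x h1 h2).1 (hmaps x h1 h2).2).le k
    exact a1.trans_lt (hfx x h1 h2)
  set h : Equiv.Perm ℝ := (f * g)⁻¹ * (g * f) with hh
  have hhS : h ∈ S := S.mul_mem (S.inv_mem (S.mul_mem hf hg)) (S.mul_mem hg hf)
  have hBh : Commute (f ^ n) h := ((hBf.mul_right hBg).inv_right).mul_right (hBg.mul_right hBf)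
  have hiff : ∀ x, h x = x ↔ g (f x) = f (g x) := by
    intro x
    rw [hh, Equiv.Perm.mul_apply, Equiv.Perm.inv_eq_iff_eq]
    rfl
  by_cases hex : ∃ x₀, p < x₀ ∧ x₀ < q ∧ h x₀ = x₀
  · obtain ⟨x₀, h1, h2, h3⟩ := hex
    intro x hx1 hx2
    have hBS := hS _ (S.pow_mem hf n)
    have := kopell u v p q x₀ (f ^ n) h hBS.1 hup h1 h2 hqv (iter_fix f p hfp n) hBx hBS.2
      (hS h hhS).1 (fun r => (hS _ (S.zpow_mem hhS r)).2) (fun r => (hS _ (S.zpow_mem hhS r)).1)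
      hBh h3 x hx1 hx2
    exact ((hiff x).1 this).symm
  · push Not at hex
    intro x hx1 hx2
    exfalso
    have hne : ∀ y, p < y → y < q → g (f y) ≠ f (g y) := fun y h1 h2 h3 =>
      hex y h1 h2 ((hiff y).2 h3)
    have hcf := perm_cont f hfm
    have hcg := perm_cont g hgm
    have hBgx : g ((f ^ n) x) = (f ^ n) (g x) :=
      (congrArg (fun k : Equiv.Perm ℝ => k x) hBg.eq).symm
    have ivt : ∀ y z, p < y → y < q → p < z → z < q → g (f y) < f (g y) →
        f (g z) < g (f z) → False := by
      intro y z h1 h2 h3 h4 h5 h6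
      obtain ⟨w, ⟨hw1, hw2⟩, hw⟩ := (isPreconnected_Ioo (a := p) (b := q)).intermediate_value₂
        (a := y) (b := z) ⟨h1, h2⟩ ⟨h3, h4⟩ (f := fun w => g (f w)) (g := fun w => f (g w))
        (hcg.comp hcf).continuousOn (hcf.comp hcg).continuousOn h5.le h6.le
      exact hne w hw1 hw2 hw
    obtain ⟨k, rfl⟩ := Nat.exists_eq_succ_of_ne_zero hn.ne'
    rcases lt_or_gt_of_ne (hne x hx1 hx2) with hlt | hgt
    · have := ratio_chain f g hfm p q hmaps (fun z h3 h4 => by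
        rcases lt_or_gt_of_ne (hne z h3 h4) with h | h
        · exact h
        · exact (ivt x z hx1 hx2 h3 h4 hlt h).elim) k x hx1 hx2
      exact this.ne hBgx
    · have := ratio_chain' f g hfm p q hmaps (fun z h3 h4 => by
        rcases lt_or_gt_of_ne (hne z h3 h4) with h | h
        · exact (ivt z x h3 h4 hx1 hx2 h hgt).elim
        · exact h) k x hx1 hx2
      exact this.ne' hBgx

/-- The component of the complement of the fixed point set. -/
theorem exists_component (u v x : ℝ) (f : Equiv.Perm ℝ) (hf : StrictMono f) (hux : u ≤ x)
    (hxv : x ≤ v) (hu : f u = u) (hv : f v = v) (hx : f x < x) :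
    ∃ p q, u ≤ p ∧ q ≤ v ∧ p < x ∧ x < q ∧ f p = p ∧ f q = q ∧ ∀ y, p < y → y < q → f y < y := by
  have hc := perm_cont f hf
  have hclosed : IsClosed {y | f y = y} := isClosed_eq hc continuous_id
  have cA : IsCompact ({y | f y = y} ∩ Set.Icc u x) := isCompact_Icc.inter_left hclosed
  have cB : IsCompact ({y | f y = y} ∩ Set.Icc x v) := isCompact_Icc.inter_left hclosed
  obtain ⟨p, ⟨hp1, hp2, hp3⟩, hpmax⟩ := cA.exists_isGreatest ⟨u, hu, le_rfl, hux⟩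
  obtain ⟨q, ⟨hq1, hq2, hq3⟩, hqmin⟩ := cB.exists_isLeast ⟨v, hv, hxv, le_rfl⟩
  have hpx : p ≠ x := by rintro rfl; exact hx.ne hp1
  have hqx : x ≠ q := by rintro rfl; exact hx.ne hq1
  refine ⟨p, q, hp2, hq3, lt_of_le_of_ne hp3 hpx, lt_of_le_of_ne hq2 hqx, hp1, hq1, ?_⟩
  have hne : ∀ y, p < y → y < q → f y ≠ y := by
    intro y h1 h2 h3
    rcases le_total y x with h | h
    · exact absurd (hpmax ⟨h3, hp2.trans h1.le, h⟩) (not_le.2 h1)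
    · exact absurd (hqmin ⟨h3, h, h2.le.trans hq3⟩) (not_le.2 h2)
  intro y h1 h2
  rcases lt_or_gt_of_ne (hne y h1 h2) with h | h
  · exact h
  · obtain ⟨w, ⟨hw1, hw2⟩, hw⟩ := (isPreconnected_Ioo (a := p) (b := q)).intermediate_value₂
        (a := x) (b := y) ⟨lt_of_le_of_ne hp3 hpx, lt_of_le_of_ne hq2 hqx⟩ ⟨h1, h2⟩
        (f := f) (g := id)
        hc.continuousOn continuous_id.continuousOn hx.le (le_of_lt h)
    exact absurd hw (hne w hw1 hw2)

theorem comm_all (u v : ℝ) (S : Subgroup (Equiv.Perm ℝ))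
    (hS : ∀ f ∈ S, StrictMono f ∧ Distort u v f) (hout : ∀ f ∈ S, ∀ x, x ≤ u ∨ v ≤ x → f x = x)
    (f g : Equiv.Perm ℝ) (hf : f ∈ S) (hg : g ∈ S)
    (m n : ℕ) (hm : 0 < m) (hn : 0 < n) (hrel : g ^ m = f ^ n) : f * g = g * f := by
  ext x
  simp only [Equiv.Perm.mul_apply]
  by_cases hfx : f x = x
  · have : g x = x := by
      apply fix_of_pow_fix g (hS g hg).1 x m hm
      rw [hrel, iter_fix f x hfx]
    rw [hfx, this, hfx]
  have hux : u ≤ x := by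
    by_contra h; exact hfx (hout f hf x (Or.inl (not_le.1 h).le))
  have hxv : x ≤ v := by
    by_contra h; exact hfx (hout f hf x (Or.inr (not_le.1 h).le))
  have main : ∀ f g : Equiv.Perm ℝ, f ∈ S → g ∈ S → g ^ m = f ^ n → ∀ x, u ≤ x → x ≤ v →
      f x < x → f (g x) = g (f x) := by
    intro f g hf hg hrel x hux hxv hx
    obtain ⟨p, q, h1, h2, h3, h4, h5, h6, h7⟩ := exists_component u v x f (hS f hf).1 hux hxv
      (hout f hf u (Or.inl le_rfl)) (hout f hf v (Or.inr le_rfl)) hx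
    exact comm_on u v p q S hS f g hf hg m n hn hrel h1 h2 h5 h6 h7 x h3 h4
  rcases lt_or_gt_of_ne hfx with h | h
  · exact main f g hf hg hrel x hux hxv h
  · -- use inverses at the point `y = f (g x)`
    have hfi := S.inv_mem hf
    have hgi := S.inv_mem hg
    have hreli : g⁻¹ ^ m = f⁻¹ ^ n := by rw [inv_pow, inv_pow, hrel]
    have hfm := (hS f hf).1
    have hgm := (hS g hg).1
    set y := f (g x) with hy
    have hgf : g x < f (g x) := by
      by_contra hcon
      rw [not_lt] at hcon
      rcases hcon.lt_or_eq with h' | h'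
      · have hb : u ≤ g x ∧ g x ≤ v := by
          constructor
          · by_contra hc; exact h'.ne (hout f hf _ (Or.inl (not_le.1 hc).le))
          · by_contra hc; exact h'.ne (hout f hf _ (Or.inr (not_le.1 hc).le))
        obtain ⟨p, q, h1, h2, h3, h4, h5, h6, h7⟩ := exists_component u v (g x) f hfm hb.1 hb.2
          (hout f hf u (Or.inl le_rfl)) (hout f hf v (Or.inr le_rfl)) h'
        have fixg : ∀ z, f z = z → g z = z := fun z hz => by
          apply fix_of_pow_fix g hgm z m hm
          rw [hrel, iter_fix f z hz]
        have hp := fixg p h5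
        have hq := fixg q h6
        have b1 : p < x := by rw [← hp] at h3; exact hgm.lt_iff_lt.1 h3
        have b2 : x < q := by rw [← hq] at h4; exact hgm.lt_iff_lt.1 h4
        exact absurd (h7 x b1 b2) (not_lt.2 h.le)
      · have : f x = x := by
          apply fix_of_pow_fix f hfm x n hn
          have e1 : (g ^ m) (g x) = g x := by rw [hrel, iter_fix f _ h']
          have e2 : g ((g ^ m) x) = g x := by
            rw [← e1, ← Equiv.Perm.mul_apply, ← Equiv.Perm.mul_apply, ← pow_succ, ← pow_succ']
          rw [← hrel]
          exact g.injective e2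
        exact hfx this
    have hb : u ≤ y ∧ y ≤ v := by
      constructor
      · by_contra hc
        have := hout f hf y (Or.inl (not_le.1 hc).le)
        exact hgf.ne' (f.injective this)
      · by_contra hc
        have := hout f hf y (Or.inr (not_le.1 hc).le)
        exact hgf.ne' (f.injective this)
    have hlt : f⁻¹ y < y := by
      have : f⁻¹ y = g x := by rw [hy]; exact f.symm_apply_apply _
      rw [this]; exact hgf
    have := main f⁻¹ g⁻¹ hfi hgi hreli y hb.1 hb.2 hlt
    have e3 : g⁻¹ (f⁻¹ y) = x := by
      rw [hy]
      rw [show f⁻¹ (f (g x)) = g x from f.symm_apply_apply _]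
      exact g.symm_apply_apply _
    rw [e3, Equiv.Perm.inv_eq_iff_eq, Equiv.Perm.inv_eq_iff_eq] at this
    rw [this]

/-! ### The analytic part -/

/-- `C²` diffeomorphisms of `[u,v]`, extended by the identity. -/
def IsDiffUV (u v : ℝ) (f : Equiv.Perm ℝ) : Prop :=
  (∀ x, x ∉ Set.Icc u v → f x = x) ∧
  ContDiffOn ℝ 2 f (Set.Icc u v) ∧
  ∀ x ∈ Set.Icc u v, 0 < derivWithin f (Set.Icc u v) x

theorem IsDiffUV.mono_mapsTo {u v : ℝ} {f : Equiv.Perm ℝ} (h : IsDiffUV u v f) :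
    StrictMono f ∧ ∀ x ∈ Set.Icc u v, f x ∈ Set.Icc u v := by
  obtain ⟨h1, h2, h3⟩ := h
  have hmaps : ∀ x ∈ Set.Icc u v, f x ∈ Set.Icc u v := by
    intro x hx
    by_contra hc
    have := f.injective (h1 _ hc)
    rw [this] at hc
    exact hc hx
  have hmono : StrictMonoOn f (Set.Icc u v) := by
    apply strictMonoOn_of_deriv_pos (convex_Icc u v) h2.continuousOn
    intro x hx
    rw [interior_Icc] at hx
    rw [← derivWithin_of_mem_nhds (Icc_mem_nhds hx.1 hx.2)]
    exact h3 x (Set.Ioo_subset_Icc_self hx)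
  refine ⟨?_, hmaps⟩
  intro x y hxy
  by_cases hx : x ∈ Set.Icc u v <;> by_cases hy : y ∈ Set.Icc u v
  · exact hmono hx hy hxy
  · rw [h1 y hy]
    have := hmaps x hx
    simp only [Set.mem_Icc, not_and_or, not_le] at *
    rcases hy with hy | hy <;> linarith
  · rw [h1 x hx]
    have := hmaps y hy
    simp only [Set.mem_Icc, not_and_or, not_le] at *
    rcases hx with hx | hx <;> linarith
  · rw [h1 x hx, h1 y hy]; exact hxy

theorem IsDiffUV.out {u v : ℝ} {f : Equiv.Perm ℝ} (huv : u < v) (h : IsDiffUV u v f) :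
    ∀ x, x ≤ u ∨ v ≤ x → f x = x := by
  obtain ⟨hm, hmaps⟩ := h.mono_mapsTo
  have hu : f u = u := by
    obtain ⟨z, hz⟩ := f.surjective u
    have hz2 : z ∈ Set.Icc u v := by
      by_contra hc
      have := h.1 z hc
      rw [← this, hz] at hc
      exact hc ⟨le_rfl, huv.le⟩
    apply le_antisymm _ (hmaps u ⟨le_rfl, huv.le⟩).1
    calc f u ≤ f z := hm.monotone hz2.1
      _ = u := hz
  have hv : f v = v := by
    obtain ⟨z, hz⟩ := f.surjective v
    have hz2 : z ∈ Set.Icc u v := by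
      by_contra hc
      have := h.1 z hc
      rw [← this, hz] at hc
      exact hc ⟨huv.le, le_rfl⟩
    apply le_antisymm (hmaps v ⟨huv.le, le_rfl⟩).2
    calc v = f z := hz.symm
      _ ≤ f v := hm.monotone hz2.2
  rintro x (hx | hx)
  · rcases hx.eq_or_lt with rfl | hx
    · exact hu
    · exact h.1 x (fun hc => not_lt.2 hc.1 hx)
  · rcases hx.eq_or_lt with rfl | hx
    · exact hv
    · exact h.1 x (fun hc => not_lt.2 hc.2 hx)

theorem IsDiffUV.distort {u v : ℝ} {f : Equiv.Perm ℝ} (huv : u < v) (h : IsDiffUV u v f) :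
    Distort u v f := by
  obtain ⟨hm, hmaps⟩ := h.mono_mapsTo
  obtain ⟨h1, h2, h3⟩ := h
  have hud := uniqueDiffOn_Icc huv
  set D := derivWithin f (Set.Icc u v) with hD
  have hDc : ContDiffOn ℝ 1 D (Set.Icc u v) := h2.derivWithin hud (by norm_num)
  have hlog : ContDiffOn ℝ 1 (fun x => Real.log (D x)) (Set.Icc u v) :=
    hDc.log fun x hx => (h3 x hx).ne'
  obtain ⟨C, hC⟩ : ∃ C : ℝ, ∀ x ∈ Set.Icc u v,
      ‖derivWithin (fun x => Real.log (D x)) (Set.Icc u v) x‖ ≤ C :=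
    isCompact_Icc.exists_bound_of_continuousOn
      (hlog.continuousOn_derivWithin hud le_rfl)
  have hlip : ∀ x ∈ Set.Icc u v, ∀ y ∈ Set.Icc u v,
      ‖Real.log (D y) - Real.log (D x)‖ ≤ C * ‖y - x‖ := fun x hx y hy =>
    (convex_Icc u v).norm_image_sub_le_of_norm_derivWithin_le
      (hlog.differentiableOn (by norm_num)) hC hx hy
  have hC0 : 0 ≤ C := (norm_nonneg _).trans (hC u ⟨le_rfl, huv.le⟩)
  have hmvt : ∀ s t, u ≤ s → s < t → t ≤ v → ∃ c, s < c ∧ c < t ∧ f t - f s = D c * (t - s) := by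
    intro s t h4 h5 h6
    have hsub : Set.Icc s t ⊆ Set.Icc u v := Set.Icc_subset_Icc h4 h6
    obtain ⟨c, hc, hc2⟩ := exists_deriv_eq_slope f h5 (h2.continuousOn.mono hsub)
      ((h2.differentiableOn (by norm_num)).mono (Set.Ioo_subset_Icc_self.trans hsub) |>.congr
        (fun _ _ => rfl))
    refine ⟨c, hc.1, hc.2, ?_⟩
    rw [hD, derivWithin_of_mem_nhds (Icc_mem_nhds (h4.trans_lt hc.1) (hc.2.trans_le h6)), hc2]
    have : t - s ≠ 0 := (sub_pos.2 h5).ne'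
    field_simp
  refine ⟨C, hC0, ?_⟩
  intro α β k1 k2 k3 s t x y k4 k5 k6 k7 k8 k9
  rcases k5.eq_or_lt with rfl | k5
  · simp
  rcases k8.eq_or_lt with rfl | k8
  · simp
  obtain ⟨c, c1, c2, c3⟩ := hmvt s t (by linarith) k5 (by linarith)
  obtain ⟨d, d1, d2, d3⟩ := hmvt x y (by linarith) k8 (by linarith)
  rw [c3, d3]
  have hcm : c ∈ Set.Icc u v := ⟨by linarith, by linarith⟩
  have hdm : d ∈ Set.Icc u v := ⟨by linarith, by linarith⟩
  have hDc := h3 c hcm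
  have hDd := h3 d hdm
  have hle : D d ≤ Real.exp (C * (β - α)) * D c := by
    rw [← Real.log_le_log_iff hDd (by positivity), Real.log_mul (Real.exp_pos _).ne' hDc.ne',
      Real.log_exp]
    have a1 := hlip c hcm d hdm
    rw [Real.norm_eq_abs, Real.norm_eq_abs] at a1
    have a2 := (le_abs_self _).trans a1
    have a3 : |d - c| ≤ β - α := abs_le.2 ⟨by linarith, by linarith⟩
    have a4 := mul_le_mul_of_nonneg_left a3 hC0
    linarith
  have hts : 0 < t - s := sub_pos.2 k5
  have hyx : 0 < y - x := sub_pos.2 k8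
  calc D d * (y - x) * (t - s) ≤ (Real.exp (C * (β - α)) * D c) * (y - x) * (t - s) := by gcongr
    _ = _ := by ring

/-- Main dynamical theorem. -/
theorem comm_diff (u v : ℝ) (huv : u < v) (S : Subgroup (Equiv.Perm ℝ))
    (hS : ∀ f ∈ S, IsDiffUV u v f)
    (f g : Equiv.Perm ℝ) (hf : f ∈ S) (hg : g ∈ S)
    (m n : ℕ) (hm : 0 < m) (hn : 0 < n) (hrel : g ^ m = f ^ n) : f * g = g * f :=
  comm_all u v S (fun f hf => ⟨(hS f hf).mono_mapsTo.1, (hS f hf).distort huv⟩)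
    (fun f hf => (hS f hf).out huv) f g hf hg m n hm hn hrel

/-! ### Relations in `BS(m,n)` -/

theorem bs_rel (m n : ℕ) :
    (PresentedGroup.of 0 : PresentedGroup (BSRels m n)) * PresentedGroup.of 1 ^ m *
      (PresentedGroup.of 0)⁻¹ = PresentedGroup.of 1 ^ n := by
  have h := PresentedGroup.one_of_mem (rels := BSRels m n) (Set.mem_singleton _)
  simp only [map_mul, map_inv, map_pow] at h
  exact mul_inv_eq_one.1 h

/-! ### The circle -/

/-- Cutting the circle open at `u`. -/
noncomputable def cutHom (u : ℝ) : Equiv.Perm (AddCircle (1 : ℝ)) →* Equiv.Perm ℝ := by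
  classical
  exact (Equiv.Perm.ofSubtype (p := fun x => x ∈ Set.Ico u (u + 1))).comp
    (Equiv.permCongrHom (AddCircle.equivIco (1 : ℝ) u)).toMonoidHom

theorem cutHom_injective (u : ℝ) : Function.Injective (cutHom u) := by
  classical
  unfold cutHom
  exact Equiv.Perm.ofSubtype_injective.comp (Equiv.permCongrHom (AddCircle.equivIco (1 : ℝ) u)).injective

theorem cutHom_apply_mem (u : ℝ) (g : Equiv.Perm (AddCircle (1 : ℝ))) (x : ℝ)
    (hx : x ∈ Set.Ico u (u + 1)) :
    cutHom u g x = AddCircle.equivIco (1 : ℝ) u (g x) := by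
  classical
  unfold cutHom
  simp only [MonoidHom.comp_apply]
  rw [Equiv.Perm.ofSubtype_apply_of_mem _ hx]
  simp [Equiv.permCongrHom]
  rfl

theorem cutHom_apply_not_mem (u : ℝ) (g : Equiv.Perm (AddCircle (1 : ℝ))) (x : ℝ)
    (hx : x ∉ Set.Ico u (u + 1)) :
    cutHom u g x = x := by
  classical
  unfold cutHom
  exact Equiv.Perm.ofSubtype_apply_of_not_mem _ hx

theorem coe_eq_iff_int (x y : ℝ) (h : (x : AddCircle (1 : ℝ)) = y) : ∃ k : ℤ, x = y + k := by
  have h1 : ((x - y : ℝ) : AddCircle (1 : ℝ)) = 0 := by rw [AddCircle.coe_sub, h, sub_self]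
  obtain ⟨k, hk⟩ := (AddCircle.coe_eq_zero_iff (1 : ℝ)).1 h1
  refine ⟨k, ?_⟩
  simp only [zsmul_eq_mul, mul_one] at hk
  linarith

theorem cut_diff (u : ℝ) (g : Equiv.Perm (AddCircle (1 : ℝ))) (hg : IsDiffCircle g)
    (hfix : g u = u) : IsDiffUV u (u + 1) (cutHom u g) := by
  obtain ⟨F₀, h1, h2, h3, h4⟩ := hg
  obtain ⟨k, hk⟩ : ∃ k : ℤ, F₀ u = u + k := coe_eq_iff_int _ _ (by rw [← h4, hfix])
  set F : ℝ → ℝ := fun x => F₀ x - k with hF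
  have hFc : ContDiff ℝ 2 F := h1.sub contDiff_const
  have hFd : ∀ x, 0 < deriv F x := fun x => by
    rw [hF, deriv_sub_const]; exact h2 x
  have hFu : F u = u := by simp [hF, hk]
  have hFu1 : F (u + 1) = u + 1 := by simp only [hF, h3, hk]; ring
  have hFm : StrictMono F := strictMono_of_deriv_pos hFd
  have hcoe : ∀ x : ℝ, g x = (F x : ℝ) := by
    intro x
    rw [h4]
    simp only [hF]
    rw [AddCircle.coe_sub]
    have : ((k : ℝ) : AddCircle (1 : ℝ)) = 0 := by
      rw [AddCircle.coe_eq_zero_iff]; exact ⟨k, by simp⟩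
    rw [this, sub_zero]
  have heq : Set.EqOn (cutHom u g) F (Set.Icc u (u + 1)) := by
    intro x hx
    rcases hx.2.eq_or_lt with rfl | hlt
    · rw [cutHom_apply_not_mem _ _ _ (by simp), hFu1]
    · rw [cutHom_apply_mem _ _ _ ⟨hx.1, hlt⟩, hcoe]
      apply AddCircle.equivIco_coe_of_mem
      refine ⟨?_, ?_⟩
      · rw [← hFu]; exact hFm.monotone hx.1
      · rw [← hFu1]; exact hFm hlt
  refine ⟨?_, ?_, ?_⟩
  · intro x hx
    exact cutHom_apply_not_mem _ _ _ (fun hc => hx (Set.Ico_subset_Icc_self hc))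
  · exact hFc.contDiffOn.congr heq
  · intro x hx
    rw [derivWithin_congr heq (heq hx),
      ((hFc.differentiable (by norm_num)) x).derivWithin (uniqueDiffOn_Icc (by linarith) x hx)]
    exact hFd x

/-- If a circle diffeo has a fixed point, points fixed by a power are fixed. -/
theorem circle_fix_of_pow (g : Equiv.Perm (AddCircle (1 : ℝ))) (hg : IsDiffCircle g)
    (y x : AddCircle (1 : ℝ)) (hy : g y = y) (m : ℕ) (hm : 0 < m) (hx : (g ^ m) x = x) :
    g x = x := by
  obtain ⟨u, rfl⟩ := QuotientAddGroup.mk_surjective y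
  have hd := cut_diff u g hg hy
  set z : ℝ := (AddCircle.equivIco (1 : ℝ) u x : Set.Ico u (u + 1)).1 with hz
  have hzm : z ∈ Set.Ico u (u + 1) := (AddCircle.equivIco (1 : ℝ) u x).2
  have hzx : (z : AddCircle (1 : ℝ)) = x := AddCircle.coe_equivIco
  have h1 : ((cutHom u g) ^ m) z = z := by
    rw [← map_pow, cutHom_apply_mem _ _ _ hzm, hzx, hx]
  have h2 := fix_of_pow_fix _ hd.mono_mapsTo.1 z m hm h1
  rw [cutHom_apply_mem _ _ _ hzm, hzx, hz] at h2
  exact (AddCircle.equivIco (1 : ℝ) u).injective (Subtype.ext h2)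

theorem lift_unique (F G : ℝ → ℝ) (hF : Continuous F) (hG : Continuous G)
    (h : ∀ x : ℝ, (F x : AddCircle (1 : ℝ)) = (G x : ℝ)) : ∃ k : ℤ, ∀ x, F x = G x + k := by
  choose k hk using fun x => coe_eq_iff_int _ _ (h x)
  have hkc : Continuous fun x => (k x : ℝ) := by
    have : (fun x => (k x : ℝ)) = fun x => F x - G x := by
      ext x; rw [hk x]; ring
    rw [this]; exact hF.sub hG
  have hkc' : Continuous k := Int.isClosedEmbedding_coe_real.isInducing.continuous_iff.2 hkc
  refine ⟨k 0, fun x => ?_⟩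
  rw [hk x]
  congr 2
  exact (PreconnectedSpace.constant inferInstance hkc')

theorem exists_circle_fix (a b : Equiv.Perm (AddCircle (1 : ℝ))) (ha : IsDiffCircle a)
    (hb : IsDiffCircle b) (m n : ℕ) (hmn : m < n) (hrel : a * b ^ m = b ^ n * a) :
    ∃ x, (b ^ (n - m)) x = x := by
  obtain ⟨A, a1, a2, a3, a4⟩ := ha
  obtain ⟨B, b1, b2, b3, b4⟩ := hb
  let LA : CircleDeg1Lift := ⟨⟨A, (strictMono_of_deriv_pos a2).monotone⟩, a3⟩
  let LB : CircleDeg1Lift := ⟨⟨B, (strictMono_of_deriv_pos b2).monotone⟩, b3⟩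
  have hLA : ∀ x : ℝ, a x = (LA x : ℝ) := a4
  have hLB : ∀ x : ℝ, b x = (LB x : ℝ) := b4
  have cA : Continuous LA := a1.continuous
  have cB : Continuous LB := b1.continuous
  have hpow : ∀ (k : ℕ) (x : ℝ), (b ^ k) x = ((LB ^ k) x : ℝ) := by
    intro k
    induction k with
    | zero => intro x; simp
    | succ k ih =>
      intro x
      rw [pow_succ', pow_succ', Equiv.Perm.mul_apply, ih, hLB]; rfl
  obtain ⟨k, hk⟩ := lift_unique (LA * LB ^ m : CircleDeg1Lift) (LB ^ n * LA : CircleDeg1Lift)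
    (cA.comp (LB.continuous_pow cB m)) ((LB.continuous_pow cB n).comp cA) (by
      intro x
      rw [CircleDeg1Lift.mul_apply, CircleDeg1Lift.mul_apply, ← hLA, ← hpow, ← hpow, ← hLA]
      exact congrArg (fun e : Equiv.Perm (AddCircle (1 : ℝ)) => e x) hrel)
  let T : CircleDeg1Lift := (CircleDeg1Lift.translate (Multiplicative.ofAdd (k : ℝ)) : CircleDeg1Liftˣ)
  have hT : ∀ x, T x = k + x := fun x => CircleDeg1Lift.translate_apply _ _
  have hsemi : SemiconjBy LA (LB ^ m) (T * LB ^ n) := by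
    apply CircleDeg1Lift.ext
    intro x
    rw [hk]
    simp only [CircleDeg1Lift.mul_apply, hT]
    ring
  have hcomm : Commute T (LB ^ n) := by
    apply CircleDeg1Lift.ext
    intro x
    simp only [CircleDeg1Lift.mul_apply, hT, CircleDeg1Lift.map_int_add]
  have e1 := CircleDeg1Lift.translationNumber_eq_of_semiconjBy hsemi
  rw [CircleDeg1Lift.translationNumber_mul_of_commute hcomm, CircleDeg1Lift.translationNumber_pow,
    CircleDeg1Lift.translationNumber_pow, CircleDeg1Lift.translationNumber_translate] at e1
  have e2 : CircleDeg1Lift.translationNumber (LB ^ (n - m)) = ((-k : ℤ) : ℝ) := by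
    rw [CircleDeg1Lift.translationNumber_pow, Nat.cast_sub hmn.le]
    push_cast
    linarith
  obtain ⟨x, hx⟩ := (CircleDeg1Lift.translationNumber_eq_int_iff _ (LB.continuous_pow cB (n - m))).1 e2
  refine ⟨(x : ℝ), ?_⟩
  rw [hpow, hx, AddCircle.coe_add]
  have : (((-k : ℤ) : ℝ) : AddCircle (1 : ℝ)) = 0 := by
    rw [AddCircle.coe_eq_zero_iff]; exact ⟨-k, by simp⟩
  rw [this, add_zero]

/-- **Non-existence of C² Baumslag–Solitar actions.** For integers `n > m > 1`, there
is no injective group homomorphism from `BS(m,n) = ⟨a, b | a bᵐ a⁻¹ = bⁿ⟩` into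
`Diff²₊(I)`; if moreover `m` does not divide `n`, there is also no injective group
homomorphism from `BS(m,n)` into `Diff²₊(S¹)`. -/
theorem bs_no_C2_action (m n : ℕ) (hm : 1 < m) (hmn : m < n) :
    (¬ ∃ φ : PresentedGroup (BSRels m n) →* Equiv.Perm ℝ,
        Function.Injective φ ∧ ∀ w, IsDiffI (φ w)) ∧
    (¬ (m ∣ n) → ¬ ∃ φ : PresentedGroup (BSRels m n) →* Equiv.Perm (AddCircle (1 : ℝ)),
        Function.Injective φ ∧ ∀ w, IsDiffCircle (φ w)) := by
  have hm0 : 0 < m := by omega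
  have hn0 : 0 < n := by omega
  set a : PresentedGroup (BSRels m n) := PresentedGroup.of 0 with ha
  set b : PresentedGroup (BSRels m n) := PresentedGroup.of 1 with hb
  have hrel : a * b ^ m * a⁻¹ = b ^ n := bs_rel m n
  have hpow : ∀ r : ℕ, (a * b ^ r * a⁻¹) ^ m = (b ^ r) ^ n := by
    intro r
    rw [conj_pow, ← pow_mul, mul_comm r m, pow_mul, ← conj_pow, hrel, ← pow_mul, ← pow_mul,
      mul_comm]
  refine ⟨?_, ?_⟩
  · rintro ⟨φ, hinj, hφ⟩
    have h := comm_diff 0 1 one_pos φ.range (by rintro _ ⟨w, rfl⟩; exact hφ w)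
      (φ (b ^ 1)) (φ (a * b ^ 1 * a⁻¹)) ⟨_, rfl⟩ ⟨_, rfl⟩ m n hm0 hn0
      (by rw [← map_pow, ← map_pow, hpow])
    rw [← map_mul, ← map_mul] at h
    exact bs_ne m n 1 hm0 hn0 (by rw [Nat.dvd_one]; omega) (by rw [Nat.dvd_one]; omega) a b ha hb
      (hinj h).symm
  · rintro hdvd ⟨φ, hinj, hφ⟩
    set r := n - m with hr
    obtain ⟨x, hx⟩ := exists_circle_fix (φ a) (φ b) (hφ a) (hφ b) m n hmn (by
      rw [← map_pow, ← map_pow, ← map_mul, ← map_mul, ← hrel]; congr 1; group)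
    rw [← map_pow] at hx
    have hx1 : φ (a * b ^ r * a⁻¹) x = x := by
      apply circle_fix_of_pow _ (hφ _) (φ a x) x _ m hm0
      · rw [← map_pow, hpow, map_pow]
        exact Function.IsFixedPt.perm_pow (e := φ (b ^ r)) hx n
      · rw [map_mul, map_mul, map_inv, Equiv.Perm.mul_apply, Equiv.Perm.mul_apply]
        rw [show (φ a)⁻¹ (φ a x) = x from (φ a).symm_apply_apply x, hx]
    obtain ⟨u, rfl⟩ := QuotientAddGroup.mk_surjective x
    let S : Subgroup (Equiv.Perm ℝ) :=
      (φ.range ⊓ MulAction.stabilizer (Equiv.Perm (AddCircle (1 : ℝ)))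
        (u : AddCircle (1 : ℝ))).map (cutHom u)
    have h := comm_diff u (u + 1) (by linarith) S (by
        rintro _ ⟨_, ⟨⟨w, rfl⟩, hw⟩, rfl⟩
        exact cut_diff u _ (hφ w) hw)
      (cutHom u (φ (b ^ r))) (cutHom u (φ (a * b ^ r * a⁻¹)))
      ⟨_, ⟨⟨_, rfl⟩, hx⟩, rfl⟩ ⟨_, ⟨⟨_, rfl⟩, hx1⟩, rfl⟩ m n hm0 hn0
      (by rw [← map_pow, ← map_pow, ← map_pow, ← map_pow, hpow])
    rw [← map_mul, ← map_mul, ← map_mul, ← map_mul] at h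
    have hnr : ¬ n ∣ r := fun hc => by
      have := Nat.le_of_dvd (by omega) hc
      omega
    have hmr : ¬ m ∣ r := fun hc => by
      apply hdvd
      have := (Nat.dvd_add_right (dvd_refl m)).2 hc
      rwa [hr, Nat.add_sub_cancel' hmn.le] at this
    exact bs_ne m n r hm0 hn0 hmr hnr a b ha hb (hinj (cutHom_injective u h)).symm
end

section
/- Local rigidity of the standard BS(1,n) action: Let n ≥ 2 be an integer, g₀(x) = nx and h₀(x) = x + 1. There exists ε > 0 such that: whenever g and h are C¹ diffeomorphisms of ℝ (continuously differentiable bijections with positive derivative) satisfying sup_{x∈ℝ} |g(x) − g₀(x)| < ε, sup_{x∈ℝ} |g'(x) − n| < ε, sup_{x∈ℝ} |h(x) − h₀(x)| < ε, sup_{x∈ℝ} |h'(x) − 1| < ε, and the relation g ∘ h ∘ g⁻¹ = hⁿ, there exists a homeomorphism φ of ℝ with φ ∘ g = g₀ ∘ φ and φ ∘ h = h₀ ∘ φ; that is, the action of BS(1,n) generated by g and h is topologically conjugate to the standard affine action generated by g₀ and h₀. -/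
open Filter Topology

/-- An integer-valued time function for `h`. -/
lemma bs_exists_tau (h : ℝ → ℝ) (hb : Function.Bijective h) (hm : StrictMono h)
    (hlo : ∀ x, x + 1 / 2 ≤ h x) :
    ∃ (H : Equiv.Perm ℝ) (τ : ℝ → ℤ), (∀ x, H x = h x) ∧ Monotone τ ∧
      (∀ x, τ (h x) = τ x + 1) ∧
      (∀ y, (H ^ (τ y)) 0 ≤ y ∧ y < (H ^ (τ y + 1)) 0) := by
  set H : Equiv.Perm ℝ := Equiv.ofBijective h hb with hH
  have hHx : ∀ x, H x = h x := fun x => rfl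
  set f : ℤ → ℝ := fun m => (H ^ m) 0 with hf
  have fs : ∀ m, f (m + 1) = h (f m) := by
    intro m
    simp only [hf]
    rw [add_comm, zpow_add, zpow_one, Equiv.Perm.mul_apply, hHx]
  have fmono : StrictMono f := by
    apply strictMono_int_of_lt_succ
    intro m
    rw [fs]
    linarith [hlo (f m)]
  have f0 : f 0 = 0 := by simp [hf]
  have fup : ∀ k : ℕ, (k : ℝ) / 2 ≤ f k := by
    intro k
    induction k with
    | zero => simp [f0]
    | succ k ih =>
      push_cast
      rw [fs]
      linarith [hlo (f k)]
  have fdn : ∀ k : ℕ, f (-(k : ℤ)) ≤ -(k : ℝ) / 2 := by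
    intro k
    induction k with
    | zero => simp [f0]
    | succ k ih =>
      have h1 := fs (-((k + 1 : ℕ) : ℤ))
      have h2 := hlo (f (-((k + 1 : ℕ) : ℤ)))
      have h3 : -((k + 1 : ℕ) : ℤ) + 1 = -(k : ℤ) := by push_cast; ring
      rw [h3] at h1
      push_cast at *
      linarith
  have ex : ∀ y, ∃ m : ℤ, f m ≤ y ∧ y < f (m + 1) := by
    intro y
    obtain ⟨N, hN⟩ := exists_nat_gt (2 * |y|)
    have a1 := fup N
    have a2 := fdn N
    have b1 := le_abs_self y
    have b2 := neg_abs_le y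
    obtain ⟨m, hm1, hm2⟩ := Int.exists_greatest_of_bdd (P := fun m => f m ≤ y)
      ⟨N, fun z hz => by
        by_contra hc
        push Not at hc
        have := fmono hc
        linarith⟩ ⟨-N, by linarith⟩
    refine ⟨m, hm1, ?_⟩
    by_contra hc
    push Not at hc
    have := hm2 _ hc
    omega
  choose τ h1 h2 using ex
  refine ⟨H, τ, hHx, ?_, ?_, fun y => ⟨h1 y, h2 y⟩⟩
  · intro x y hxy
    have : f (τ x) < f (τ y + 1) := lt_of_le_of_lt (h1 x) (lt_of_le_of_lt hxy (h2 y))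
    have := fmono.lt_iff_lt.1 this
    omega
  · intro x
    have a1 : f (τ x + 1) ≤ h x := by rw [fs]; exact hm.monotone (h1 x)
    have a2 : h x < f (τ x + 1 + 1) := by rw [fs]; exact hm (h2 x)
    have c1 := fmono.lt_iff_lt.1 (lt_of_le_of_lt a1 (h2 (h x)))
    have c2 := fmono.lt_iff_lt.1 (lt_of_le_of_lt (h1 (h x)) a2)
    omega

lemma bs_exists_phi (n : ℕ) (hn : 2 ≤ n) (g h : ℝ → ℝ) (gb : Function.Bijective g)
    (gm : StrictMono g) (hb : Function.Bijective h) (hm : StrictMono h)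
    (hlo : ∀ x, x + 1 / 2 ≤ h x) (hr : ∀ x : ℝ, g (h x) = h^[n] (g x)) :
    ∃ φ : ℝ → ℝ, Monotone φ ∧ (∀ x, φ (g x) = n * φ x) ∧ (∀ x, φ (h x) = φ x + 1) := by
  obtain ⟨H, τ, hH, τm, τh, τb⟩ := bs_exists_tau h hb hm hlo
  have hn0 : (0 : ℝ) < n := by positivity
  have hn2 : (2 : ℝ) ≤ n := by exact_mod_cast hn
  have hHf : (H : ℝ → ℝ) = h := funext hH
  have τit : ∀ (k : ℕ) x, τ (h^[k] x) = τ x + k := by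
    intro k
    induction k with
    | zero => simp
    | succ k ih => intro x; rw [Function.iterate_succ_apply', τh, ih]; push_cast; ring
  have τz : ∀ (m : ℤ) x, τ ((H ^ m) x) = τ x + m := by
    intro m x
    obtain ⟨k, rfl | rfl⟩ := m.eq_nat_or_neg
    · rw [zpow_natCast, ← Equiv.Perm.iterate_eq_pow, hHf, τit]
    · have := τit k ((H ^ (-(k : ℤ))) x)
      rw [← hHf, Equiv.Perm.iterate_eq_pow, ← Equiv.Perm.mul_apply] at this
      simp at this
      simp
      omega
  set G : Equiv.Perm ℝ := Equiv.ofBijective g gb with hG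
  have hGx : ∀ x, G x = g x := fun x => rfl
  have conj : G * H * G⁻¹ = H ^ n := by
    rw [mul_inv_eq_iff_eq_mul]
    ext x
    rw [Equiv.Perm.mul_apply, Equiv.Perm.mul_apply, ← Equiv.Perm.iterate_eq_pow, hHf, hGx, hGx,
      hr]
  have gz : ∀ (m : ℤ) x, g ((H ^ m) x) = (H ^ (n * m : ℤ)) (g x) := by
    intro m x
    have : G * H ^ m = H ^ (n * m : ℤ) * G := by
      rw [zpow_mul, zpow_natCast, ← conj, conj_zpow]
      group
    have := congrArg (fun e : Equiv.Perm ℝ => e x) this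
    simpa [Equiv.Perm.mul_apply, hGx] using this
  have lo : ∀ y, n * τ y + τ (g 0) ≤ τ (g y) := by
    intro y
    have := τm (gm.monotone (τb y).1)
    rw [gz, τz] at this
    linarith
  have hi : ∀ y, τ (g y) ≤ n * τ y + n + τ (g 0) := by
    intro y
    have := τm (gm.monotone (τb y).2.le)
    rw [gz, τz] at this
    linarith
  set C : ℝ := n + |(τ (g 0) : ℝ)| with hC
  have hD : ∀ y, |(τ (g y) : ℝ) - n * τ y| ≤ C := by
    intro y
    have l : ((n * τ y + τ (g 0) : ℤ) : ℝ) ≤ τ (g y) := by exact_mod_cast lo y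
    have u : (τ (g y) : ℝ) ≤ ((n * τ y + n + τ (g 0) : ℤ) : ℝ) := by exact_mod_cast hi y
    push_cast at l u
    have b1 := le_abs_self (τ (g 0) : ℝ)
    have b2 := neg_abs_le (τ (g 0) : ℝ)
    rw [abs_le]
    constructor <;> linarith
  let Φ : ℕ → ℝ → ℝ := fun k x => (τ (g^[k] x) : ℝ) / n ^ k
  have lim : ∀ x, ∃ L, Tendsto (fun k => Φ k x) atTop (𝓝 L) := by
    intro x
    apply cauchySeq_tendsto_of_complete
    apply cauchySeq_of_le_geometric (1 / (n : ℝ)) (C / n)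
    · rw [div_lt_one hn0]; linarith
    · intro k
      have : Φ k x - Φ (k + 1) x =
          -((τ (g (g^[k] x)) : ℝ) - n * τ (g^[k] x)) / (n ^ (k + 1)) := by
        simp only [Φ, Function.iterate_succ_apply']
        field_simp
        ring
      rw [Real.dist_eq, this, abs_div, abs_neg, abs_of_pos (by positivity : (0 : ℝ) < n ^ (k + 1))]
      calc _ ≤ C / n ^ (k + 1) := by gcongr; exact hD _
        _ = _ := by rw [pow_succ, one_div, inv_pow]; field_simp
  choose φ hφ using lim
  refine ⟨φ, ?_, ?_, ?_⟩
  · intro x y hxy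
    refine le_of_tendsto_of_tendsto' (hφ x) (hφ y) fun k => ?_
    have : τ (g^[k] x) ≤ τ (g^[k] y) := τm (gm.monotone.iterate k hxy)
    have : (τ (g^[k] x) : ℝ) ≤ τ (g^[k] y) := by exact_mod_cast this
    simp only [Φ]
    gcongr
  · intro x
    refine tendsto_nhds_unique (hφ (g x)) ?_
    have := ((hφ x).comp (tendsto_add_atTop_nat 1)).const_mul (n : ℝ)
    refine this.congr fun k => ?_
    simp only [Φ, Function.comp, Function.iterate_succ_apply]
    field_simp
    try ring
  · intro x
    refine tendsto_nhds_unique (hφ (h x)) ?_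
    refine ((hφ x).add_const 1).congr fun k => ?_
    have key : ∀ k : ℕ, g^[k] (h x) = (H ^ ((n : ℤ) ^ k)) (g^[k] x) := by
      intro k
      induction k with
      | zero => simp [hH]
      | succ k ih =>
        rw [Function.iterate_succ_apply', ih, gz, Function.iterate_succ_apply', pow_succ, mul_comm]
    simp only [Φ]
    rw [key, τz]
    push_cast
    field_simp


/-- **Local rigidity of the standard `BS(1,n)` action on `ℝ`.** Let `n ≥ 2`,
`g₀ x = n x` and `h₀ x = x + 1`.  There is an `ε > 0` such that whenever `g` and `h`
are C¹ diffeomorphisms of `ℝ` (continuously differentiable bijections with positive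
derivative) which are uniformly `ε`-C¹-close to `g₀` and `h₀` respectively and satisfy
the relation `g ∘ h ∘ g⁻¹ = hⁿ` (equivalently `g ∘ h = hⁿ ∘ g`), there is a
homeomorphism `φ` of `ℝ` conjugating the pair `(g, h)` to `(g₀, h₀)`:
`φ ∘ g = g₀ ∘ φ` and `φ ∘ h = h₀ ∘ φ`. -/
theorem bs_one_n_local_rigidity (n : ℕ) (hn : 2 ≤ n) :
    ∃ ε > (0 : ℝ), ∀ g h : ℝ → ℝ,
      Function.Bijective g → ContDiff ℝ 1 g → (∀ x, 0 < deriv g x) →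
      Function.Bijective h → ContDiff ℝ 1 h → (∀ x, 0 < deriv h x) →
      (∀ x : ℝ, |g x - n * x| < ε) → (∀ x : ℝ, |deriv g x - n| < ε) →
      (∀ x : ℝ, |h x - (x + 1)| < ε) → (∀ x : ℝ, |deriv h x - 1| < ε) →
      (∀ x : ℝ, g (h x) = h^[n] (g x)) →
      ∃ φ : ℝ ≃ₜ ℝ, (∀ x : ℝ, φ (g x) = n * φ x) ∧ (∀ x : ℝ, φ (h x) = φ x + 1) := by
  refine ⟨1 / 2, by norm_num, ?_⟩
  intro g h gb gc gd hb hc hd _ g2 h1 _ hr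
  have hn2 : (2 : ℝ) ≤ n := by exact_mod_cast hn
  have hn0 : (0 : ℝ) < n := by linarith
  have gm : StrictMono g := strictMono_of_deriv_pos gd
  have hm : StrictMono h := strictMono_of_deriv_pos hd
  have hlo : ∀ x, x + 1 / 2 ≤ h x := fun x => by
    have := (abs_lt.1 (h1 x)).1
    linarith
  have hup : ∀ x, h x ≤ x + 2 := fun x => by
    have := (abs_lt.1 (h1 x)).2
    linarith
  obtain ⟨φ, φm, φg, φh⟩ := bs_exists_phi n hn g h gb gm hb hm hlo hr
  have φgk : ∀ (k : ℕ) x, φ (g^[k] x) = n ^ k * φ x := by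
    intro k
    induction k with
    | zero => simp
    | succ k ih => intro x; rw [Function.iterate_succ_apply', φg, ih]; ring
  have φhk : ∀ (k : ℕ) x, φ (h^[k] x) = φ x + k := by
    intro k
    induction k with
    | zero => simp
    | succ k ih => intro x; rw [Function.iterate_succ_apply', φh, ih]; push_cast; ring
  have gex : ∀ x y, x ≤ y → (3 / 2) * (y - x) ≤ g y - g x := by
    intro x y hxy
    refine mul_sub_le_image_sub_of_le_deriv (gc.differentiable (by norm_num)) (fun z => ?_) hxy
    have := (abs_lt.1 (g2 z)).1
    linarith
  have gexk : ∀ (k : ℕ) x y, x ≤ y → (3 / 2) ^ k * (y - x) ≤ g^[k] y - g^[k] x := by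
    intro k x y hxy
    induction k with
    | zero => simp
    | succ k ih =>
      rw [Function.iterate_succ_apply', Function.iterate_succ_apply']
      have := gex _ _ (gm.monotone.iterate k hxy)
      rw [pow_succ]
      linarith
  have φsm : StrictMono φ := by
    intro x y hxy
    obtain ⟨k, hk⟩ := pow_unbounded_of_one_lt (2 / (y - x)) (by norm_num : (1 : ℝ) < 3 / 2)
    rw [div_lt_iff₀ (by linarith)] at hk
    have e := gexk k x y hxy.le
    have : h (g^[k] x) ≤ g^[k] y := by linarith [hup (g^[k] x)]
    have := φm this
    rw [φh, φgk, φgk] at this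
    have hp : (0 : ℝ) < n ^ k := by positivity
    by_contra hcon
    push Not at hcon
    have := mul_le_mul_of_nonneg_left hcon hp.le
    linarith
  have small : ∀ u v, |u - v| ≤ 1 / 2 → |φ u - φ v| ≤ 1 := by
    intro u v huv
    have huv := abs_le.1 huv
    have a1 : u ≤ h v := by linarith [hlo v]
    have a2 : v ≤ h u := by linarith [hlo u]
    have a1 := φm a1
    have a2 := φm a2
    rw [φh] at a1 a2
    rw [abs_le]
    constructor <;> linarith
  have φc : Continuous φ := by
    rw [continuous_iff_continuousAt]
    intro x
    rw [Metric.continuousAt_iff']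
    intro δ hδ
    obtain ⟨k, hk⟩ := pow_unbounded_of_one_lt (1 / δ) (by linarith : (1 : ℝ) < n)
    rw [div_lt_iff₀ hδ] at hk
    have gk : Continuous (g^[k]) := gc.continuous.iterate k
    have := Metric.continuousAt_iff'.1 (gk.continuousAt (x := x)) (1 / 2) (by norm_num)
    filter_upwards [this] with y hy
    rw [Real.dist_eq] at hy ⊢
    have := small _ _ hy.le
    rw [φgk, φgk, ← mul_sub, abs_mul, abs_of_pos (by positivity : (0 : ℝ) < n ^ k)] at this
    have hp : (0 : ℝ) < n ^ k := by positivity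
    exact lt_of_mul_lt_mul_left (lt_of_le_of_lt this hk) hp.le
  have φs : Function.Surjective φ := by
    intro z
    obtain ⟨N, hN⟩ := exists_nat_gt (|z| + |φ 0|)
    have b1 := le_abs_self z
    have b2 := neg_abs_le z
    have b3 := le_abs_self (φ 0)
    have b4 := neg_abs_le (φ 0)
    obtain ⟨w, hw⟩ := (hb.surjective.iterate N) 0
    have e1 := φhk N w
    rw [hw] at e1
    have e2 := φhk N 0
    exact mem_range_of_exists_le_of_exists_ge φc ⟨w, by linarith⟩ ⟨h^[N] 0, by linarith⟩
  exact ⟨(φsm.orderIsoOfSurjective φ φs).toHomeomorph, fun x => φg x, fun x => φh x⟩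
end
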